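/- For every ε > 0 there exists K > 0 such that for all integers k ≥ m ≥ 2 with k/(m−1) ≥ K, one has δ(m,k) ≤ ((e^{−γ} + ε) / ((k/(m−1)) · log log(k/(m−1))))^{m−1}, where γ is the Euler–Mascheroni constant. -/

import Mathlib

open Filter Real

/-- A `k`-tuple of integers is admissible if for every prime `p` its entries
do not cover all residue classes mod `p`. -/
def AdmissibleTuple {k : ℕ} (x : Fin k → ℤ) : Prop :=
  ∀ p : ℕ, p.Prime → ∃ r : ZMod p, ∀ i, (x i : ZMod p) ≠ r

/-- An `(m,k)`-plausible set: translation invariant, permutation invariant, and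
every admissible `k`-tuple of distinct integers contains an `m`-subtuple lying in `A`. -/
def Plausible (m k : ℕ) (A : Set (Fin m → ℤ)) : Prop :=
  (∀ h ∈ A, ∀ t : ℤ, (fun i => h i + t) ∈ A) ∧
  (∀ h ∈ A, ∀ σ : Equiv.Perm (Fin m), (h ∘ σ) ∈ A) ∧
  (∀ x : Fin k → ℤ, Function.Injective x → AdmissibleTuple x →
    ∃ f : Fin m → Fin k, Function.Injective f ∧ (x ∘ f) ∈ A)

/-- The number of points of `A` in the box `[-N, N]^m`. -/
noncomputable def boxCount (m : ℕ) (A : Set (Fin m → ℤ)) (N : ℕ) : ℕ :=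
  Nat.card {h : Fin m → ℤ // h ∈ A ∧ ∀ i, |h i| ≤ (N : ℤ)}

/-- The liminf density of `A ⊆ ℤ^m` in boxes `[-N, N]^m`. -/
noncomputable def lowerBoxDensity (m : ℕ) (A : Set (Fin m → ℤ)) : ℝ :=
  Filter.liminf (fun N : ℕ => (boxCount m A N : ℝ) / (2 * N) ^ m) Filter.atTop

/-- `δ(m,k)`: the infimum over `(m,k)`-plausible sets `A` of the liminf density of `A`. -/
noncomputable def delta (m k : ℕ) : ℝ :=
  sInf { d : ℝ | ∃ A : Set (Fin m → ℤ), Plausible m k A ∧ d = lowerBoxDensity m A }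

/-!
If `φ(n)(m - 1) < k`, then the set of `m`-tuples lying in a single residue class mod `n` is
`(m, k)`-plausible: an admissible `k`-tuple has a translate consisting of units mod `n`, by the
Chinese remainder theorem, and pigeonhole puts `m` of its entries into one class. This set has
density `n ^ (-(m - 1))`, so it remains to find, for large `x`, integers `n` with `φ(n) < x` and
`n ≥ (e ^ γ - o(1)) x log log x`. Multiples of a primorial near the threshold do this, provided that
`P / φ(P) ≥ (e ^ γ - o(1)) log N` for `P = ∏ p ≤ N, p`.

The constant comes from Mertens' theorem in the form
`∑ n ≤ N, Λ(n) / (n log n) = log log N + γ + o(1)`. Since `∑ n ≤ N, Λ(n) / n - log N` is bounded,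
Dirichlet's test on dyadic blocks shows that the left side is `log log N + c + o(1)` for some
constant `c`. Abel's theorem then identifies `c` by comparison with
`∑ Λ(n) / (n ^ (1 + σ) log n) = log ζ(1 + σ) = -log σ + o(1)` as `σ → 0`; the `γ` is the one in
`∑ j ≤ J, 1 / j = log J + γ + o(1)`.
-/

open scoped Topology ArithmeticFunction.vonMangoldt
open ArithmeticFunction (vonMangoldt_nonneg)
open Finset (Ioc range)

/-! ### Plausible sets from residue classes -/

/-- The tuples in `ℤ^m` all of whose entries lie in one residue class mod `n`; for suitable `n` this
is the plausible set that bounds `delta`. -/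
def congruentTuples (m n : ℕ) : Set (Fin m → ℤ) :=
  {h | ∀ i j, h i ≡ h j [ZMOD n]}

lemma AdmissibleTuple.exists_isUnit_sub {k n : ℕ} (hn : n ≠ 0) {x : Fin k → ℤ}
    (hx : AdmissibleTuple x) : ∃ c : ℤ, ∀ i, IsUnit ((x i - c : ℤ) : ZMod n) := by
  choose! r hr using hx
  obtain ⟨c, hc⟩ := Nat.chineseRemainderOfFinset (fun p => (r p).val) id n.primeFactors
    (fun p hp => (Nat.prime_of_mem_primeFactors hp).ne_zero)
    (fun p hp q hq hpq => (Nat.coprime_primes (Nat.prime_of_mem_primeFactors hp)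
      (Nat.prime_of_mem_primeFactors hq)).2 hpq)
  refine ⟨c, fun i => ?_⟩
  rw [ZMod.coe_int_isUnit_iff_isCoprime, Int.isCoprime_iff_nat_coprime, Int.natAbs_natCast]
  refine Nat.coprime_of_dvd fun p hp hpn hpx => ?_
  have : Fact p.Prime := ⟨hp⟩
  have hcr : (c : ZMod p) = r p := by
    simpa using (ZMod.natCast_eq_natCast_iff _ _ _).2 (hc p (Nat.mem_primeFactors.2 ⟨hp, hpn, hn⟩))
  have hxc : (x i : ZMod p) - c = 0 := by
    simpa using (ZMod.intCast_zmod_eq_zero_iff_dvd _ _).2 (Int.natCast_dvd.2 hpx)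
  exact hr p hp i ((sub_eq_zero.1 hxc).trans hcr)

lemma plausible_congruentTuples {m k n : ℕ} (hn : n ≠ 0) (hk : n.totient * (m - 1) < k) :
    Plausible m k (congruentTuples m n) := by
  refine ⟨fun h hh t i j => (hh i j).add_right t, fun h hh σ i j => hh _ _, fun x _ hx => ?_⟩
  have : NeZero n := ⟨hn⟩
  obtain ⟨c, hc⟩ := hx.exists_isUnit_sub hn
  obtain ⟨u, hu⟩ := Fintype.exists_lt_card_fiber_of_mul_lt_card
    (fun i => (hc i).unit) (n := m - 1) (by rwa [ZMod.card_units_eq_totient, Fintype.card_fin])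
  have hm : m ≤ Finset.card {i | (hc i).unit = u} := by omega
  let f := Finset.orderEmbOfCardLe _ hm
  have hf (i) : ((x (f i) - c : ℤ) : ZMod n) = u :=
    congrArg Units.val (Finset.mem_filter.1 (Finset.orderEmbOfCardLe_mem _ hm i)).2
  refine ⟨f, f.injective, fun i j => ?_⟩
  simpa using ((ZMod.intCast_eq_intCast_iff _ _ _).1 ((hf i).trans (hf j).symm)).add_right c

lemma eq_of_mem_congruentTuples_of_ediv_eq {d n : ℕ} {g h : Fin (d + 1) → ℤ} (t : ℤ)
    (hg : g ∈ congruentTuples (d + 1) n) (hh : h ∈ congruentTuples (d + 1) n) (h0 : g 0 = h 0)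
    (hdiv : ∀ i : Fin d, (g i.succ + t) / n = (h i.succ + t) / n) : g = h := by
  refine funext (Fin.cases h0 fun i => ?_)
  have hmod : g i.succ + t ≡ h i.succ + t [ZMOD n] :=
    ((hg i.succ 0).trans (h0 ▸ hh 0 i.succ)).add_right t
  have hsum := Int.mul_ediv_add_emod (g i.succ + t) n
  rw [hdiv i, hmod.eq, Int.mul_ediv_add_emod] at hsum
  linarith

lemma boxCount_congruentTuples_le (d N : ℕ) {n : ℕ} (hn : n ≠ 0) :
    boxCount (d + 1) (congruentTuples (d + 1) n) N ≤ (2 * N + 1) * (2 * N / n + 1) ^ d := by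
  have hn' : (0 : ℤ) < n := by positivity
  have hquot (z : ℤ) (hz : |z| ≤ (N : ℤ)) : (z + N) / n ∈ Finset.Icc (0 : ℤ) (2 * N / n : ℕ) := by
    rw [abs_le] at hz
    refine Finset.mem_Icc.2 ⟨Int.ediv_nonneg (by linarith) hn'.le, ?_⟩
    push_cast
    exact Int.ediv_le_ediv hn' (by linarith)
  let F (h : {h // h ∈ congruentTuples (d + 1) n ∧ ∀ i, |h i| ≤ (N : ℤ)}) :
      Finset.Icc (-N : ℤ) N × (Fin d → Finset.Icc (0 : ℤ) (2 * N / n : ℕ)) :=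
    (⟨h.1 0, Finset.mem_Icc.2 (abs_le.1 (h.2.2 0))⟩,
      fun i => ⟨(h.1 i.succ + N) / n, hquot _ (h.2.2 _)⟩)
  have hF : Function.Injective F := by
    rintro ⟨g, hg, _⟩ ⟨h, hh, _⟩ hgh
    simp only [F, Prod.mk.injEq, Subtype.mk.injEq, funext_iff] at hgh
    exact Subtype.ext (eq_of_mem_congruentTuples_of_ediv_eq N hg hh hgh.1 hgh.2)
  calc boxCount (d + 1) (congruentTuples (d + 1) n) N
      ≤ Nat.card (Finset.Icc (-N : ℤ) N × (Fin d → Finset.Icc (0 : ℤ) (2 * N / n : ℕ))) :=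
        Nat.card_le_card_of_injective F hF
    _ = (2 * N + 1) * (2 * N / n + 1) ^ d := by
        rw [Nat.card_eq_fintype_card, Fintype.card_prod, Fintype.card_fun, Fintype.card_coe,
          Fintype.card_coe, Fintype.card_fin, Int.card_Icc, Int.card_Icc]
        congr 1
        omega

lemma lowerBoxDensity_congruentTuples_le (d : ℕ) {n : ℕ} (hn : n ≠ 0) :
    lowerBoxDensity (d + 1) (congruentTuples (d + 1) n) ≤ (1 / (n : ℝ)) ^ d := by
  have hlim : Tendsto (fun N : ℕ => (1 + (1 / 2 : ℝ) * (1 / N)) *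
      (1 / (n : ℝ) + (1 / 2) * (1 / N)) ^ d) atTop (𝓝 ((1 / (n : ℝ)) ^ d)) := by
    have hinv := (tendsto_one_div_atTop_nhds_zero_nat (𝕜 := ℝ)).const_mul (1 / 2)
    simpa using (hinv.const_add 1).mul ((hinv.const_add (1 / (n : ℝ))).pow d)
  rw [← hlim.liminf_eq, lowerBoxDensity]
  refine liminf_le_liminf ?_
    (isBoundedUnder_of_eventually_ge (a := 0) (Eventually.of_forall fun N => by positivity))
    hlim.isCoboundedUnder_ge
  filter_upwards [eventually_gt_atTop 0] with N hN
  rw [div_le_iff₀ (by positivity)]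
  calc (boxCount (d + 1) (congruentTuples (d + 1) n) N : ℝ)
      ≤ (2 * N + 1) * (((2 * N / n : ℕ) : ℝ) + 1) ^ d := by
        exact_mod_cast boxCount_congruentTuples_le d N hn
    _ ≤ (2 * N + 1) * (2 * N / n + 1) ^ d := by
        gcongr
        simpa using Nat.cast_div_le (α := ℝ) (m := 2 * N) (n := n)
    _ = ((1 + 1 / 2 * (1 / N)) * (2 * N)) * ((1 / n + 1 / 2 * (1 / N)) * (2 * N)) ^ d := by
        field_simp
    _ = (1 + 1 / 2 * (1 / N)) * (1 / n + 1 / 2 * (1 / N)) ^ d * (2 * N) ^ (d + 1) := by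
        rw [mul_pow]
        ring

lemma lowerBoxDensity_nonneg (m : ℕ) (A : Set (Fin m → ℤ)) : 0 ≤ lowerBoxDensity m A := by
  rw [lowerBoxDensity, liminf_eq]
  exact Real.sSup_nonneg' ⟨0, Eventually.of_forall fun N => by positivity, le_rfl⟩

lemma delta_le_lowerBoxDensity {m k : ℕ} {A : Set (Fin m → ℤ)} (hA : Plausible m k A) :
    delta m k ≤ lowerBoxDensity m A :=
  csInf_le ⟨0, by rintro _ ⟨B, -, rfl⟩; exact lowerBoxDensity_nonneg m B⟩ ⟨A, hA, rfl⟩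

theorem delta_le_one_div_pow {m k n : ℕ} (hm : 2 ≤ m) (hn : n ≠ 0)
    (hk : (n.totient : ℝ) < k / ((m : ℝ) - 1)) : delta m k ≤ (1 / (n : ℝ)) ^ (m - 1) := by
  obtain ⟨d, rfl⟩ : ∃ d, m = d + 1 := Nat.exists_eq_succ_of_ne_zero (by omega)
  have hd : (0 : ℝ) < d := by exact_mod_cast (by omega : 0 < d)
  have hk' : n.totient * (d + 1 - 1) < k := by
    rw [Nat.cast_succ, add_sub_cancel_right, lt_div_iff₀ hd] at hk
    exact_mod_cast hk
  exact (delta_le_lowerBoxDensity (plausible_congruentTuples hn hk')).trans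
    (lowerBoxDensity_congruentTuples_le d hn)

/-! ### Mertens' first theorem -/

lemma log_factorial_eq_sum_vonMangoldt (N : ℕ) :
    log (N.factorial : ℝ) = ∑ d ∈ Ioc 0 N, Λ d * ((N / d : ℕ) : ℝ) := by
  rw [← ArithmeticFunction.sum_Ioc_mul_zeta_eq_sum, ArithmeticFunction.vonMangoldt_mul_zeta]
  simp only [ArithmeticFunction.log_apply]
  rw [← Finset.prod_Ico_id_eq_factorial, Nat.cast_prod, Real.log_prod
    fun d hd => Nat.cast_ne_zero.2 (Nat.one_le_iff_ne_zero.1 (Finset.mem_Ico.1 hd).1)]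
  rfl

theorem log_sub_one_le_sum_vonMangoldt_div {N : ℕ} (hN : N ≠ 0) :
    log N - 1 ≤ ∑ d ∈ Ioc 0 N, Λ d / d := by
  have hN' : (0 : ℝ) < N := by positivity
  have hstirling := Stirling.le_log_factorial_stirling hN
  have hlog : 0 ≤ log N := Real.log_natCast_nonneg N
  have hlogpi : 0 ≤ log (2 * π) := Real.log_nonneg (by linarith [Real.pi_gt_three])
  have hsum : log (N.factorial : ℝ) ≤ N * ∑ d ∈ Ioc 0 N, Λ d / d := by
    rw [log_factorial_eq_sum_vonMangoldt, Finset.mul_sum]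
    refine Finset.sum_le_sum fun d _ => ?_
    calc Λ d * ((N / d : ℕ) : ℝ) ≤ Λ d * (N / d) :=
          mul_le_mul_of_nonneg_left Nat.cast_div_le vonMangoldt_nonneg
      _ = N * (Λ d / d) := by ring
  refine le_of_mul_le_mul_left ?_ hN'
  linarith

theorem sum_vonMangoldt_div_le_log_add {N : ℕ} (hN : N ≠ 0) :
    ∑ d ∈ Ioc 0 N, Λ d / d ≤ log N + (log 4 + 4) := by
  have hN' : (0 : ℝ) < N := by positivity
  have hfact : log (N.factorial : ℝ) ≤ N * log N := by
    rw [← Real.log_pow]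
    exact Real.log_le_log (by positivity) (by exact_mod_cast N.factorial_le_pow)
  have hpsi : ∑ d ∈ Ioc 0 N, Λ d ≤ (log 4 + 4) * N := by
    simpa [Chebyshev.psi] using Chebyshev.psi_le_const_mul_self hN'.le
  have hsum : N * ∑ d ∈ Ioc 0 N, Λ d / d - ∑ d ∈ Ioc 0 N, Λ d
      ≤ log (N.factorial : ℝ) := by
    rw [log_factorial_eq_sum_vonMangoldt, Finset.mul_sum, ← Finset.sum_sub_distrib]
    refine Finset.sum_le_sum fun d _ => ?_
    calc N * (Λ d / d) - Λ d = Λ d * (N / d - 1) := by ring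
      _ ≤ Λ d * ((N / d : ℕ) : ℝ) := by
          refine mul_le_mul_of_nonneg_left ?_ vonMangoldt_nonneg
          rw [← Nat.floor_div_eq_div (K := ℝ)]
          exact (Nat.sub_one_lt_floor _).le
  refine le_of_mul_le_mul_left ?_ hN'
  linarith

/-! ### The Dirichlet series of `Λ n / log n` -/

lemma hasSum_vonMangoldt_div_log_mul_prime_pow {p : ℕ} (hp : p.Prime) {r : ℝ} (hr : |r| < 1) :
    HasSum (fun k : ℕ => Λ (p ^ (k + 1)) / log ((p ^ (k + 1) : ℕ) : ℝ) * r ^ (k + 1))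
      (-log (1 - r)) := by
  convert Real.hasSum_pow_div_log_of_abs_lt_one hr using 2 with k
  have hlog : log p ≠ 0 := (Real.log_pos (by exact_mod_cast hp.one_lt)).ne'
  rw [ArithmeticFunction.vonMangoldt_apply_pow k.succ_ne_zero,
    ArithmeticFunction.vonMangoldt_apply_prime hp, Nat.cast_pow, Real.log_pow]
  push_cast
  field_simp

theorem summable_vonMangoldt_div_log_mul {f : ℕ → ℝ} (hf : Summable f) :
    Summable fun n : ℕ => Λ n / log n * f n := by
  refine Summable.of_norm_bounded hf.norm fun n => ?_
  rw [norm_mul]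
  refine mul_le_of_le_one_left (norm_nonneg (f n)) ?_
  rw [Real.norm_of_nonneg (div_nonneg vonMangoldt_nonneg (Real.log_natCast_nonneg n))]
  exact div_le_one_of_le₀ ArithmeticFunction.vonMangoldt_le_log (Real.log_natCast_nonneg n)

theorem tsum_vonMangoldt_div_log_mul {f : ℕ →*₀ ℝ} (hf : Summable f) :
    ∑' n : ℕ, Λ n / log n * f n = log (∑' n, f n) := by
  have habs (p : Nat.Primes) : |f p| < 1 := Summable.norm_lt_one (f := f.toMonoidHom) hf p.2.one_lt
  have hprime : Summable fun p : Nat.Primes => log (1 - f p)⁻¹ := by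
    have hneg : Summable fun p : Nat.Primes => -f p :=
      (hf.comp_injective Nat.Primes.coe_nat_injective).neg
    simpa only [Real.log_inv, sub_eq_add_neg] using (Real.summable_log_one_add_of_summable hneg).neg
  calc ∑' n : ℕ, Λ n / log n * f n
      = ∑' (p : Nat.Primes) (k : ℕ), Λ (p ^ (k + 1) : ℕ) / log ((p ^ (k + 1) : ℕ) : ℝ) *
          f (p ^ (k + 1) : ℕ) :=
        tsum_eq_tsum_primes_of_support_subset_prime_powers (summable_vonMangoldt_div_log_mul hf)
          fun n hn => ArithmeticFunction.vonMangoldt_ne_zero_iff.1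
            (div_ne_zero_iff.1 (left_ne_zero_of_mul hn)).1
    _ = ∑' p : Nat.Primes, log (1 - f p)⁻¹ := tsum_congr fun p => by
        simp only [map_pow, Real.log_inv]
        exact (hasSum_vonMangoldt_div_log_mul_prime_pow p.2 (habs p)).tsum_eq
    _ = log (∏' p : Nat.Primes, (1 - f p)⁻¹) := by
        rw [← Real.rexp_tsum_eq_tprod (fun p => inv_pos.2 (by linarith [abs_lt.1 (habs p)])) hprime,
          Real.log_exp]
    _ = log (∑' n, f n) := by
        rw [EulerProduct.eulerProduct_completely_multiplicative_tprod hf.norm]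

theorem hasSum_vonMangoldt_div_log_mul_rpow {s : ℝ} (hs : 1 < s) :
    HasSum (fun n : ℕ => Λ n / log n * (n : ℝ) ^ (-s)) (log (∑' n : ℕ, 1 / (n : ℝ) ^ s)) := by
  let f : ℕ →*₀ ℝ :=
    { toFun := fun n => (n : ℝ) ^ (-s)
      map_zero' := by simp [Real.zero_rpow (show -s ≠ 0 by linarith)]
      map_one' := by simp
      map_mul' := fun m n => by
        rw [Nat.cast_mul, Real.mul_rpow m.cast_nonneg n.cast_nonneg] }
  have hf : Summable f := Real.summable_nat_rpow.2 (by linarith)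
  have hfs (n : ℕ) : f n = 1 / (n : ℝ) ^ s := by
    rw [one_div, ← Real.rpow_neg n.cast_nonneg]
    rfl
  have htsum := tsum_vonMangoldt_div_log_mul hf
  rw [tsum_congr hfs] at htsum
  exact htsum ▸ (summable_vonMangoldt_div_log_mul hf).hasSum

theorem tendsto_log_tsum_rpow_add_log :
    Tendsto (fun σ : ℝ => log (∑' n : ℕ, 1 / (n : ℝ) ^ (1 + σ)) + log σ) (𝓝[>] 0) (𝓝 0) := by
  have hshift : Tendsto (fun σ : ℝ => 1 + σ) (𝓝[>] 0) (𝓝[>] 1) := by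
    refine tendsto_nhdsWithin_iff.2 ⟨?_, ?_⟩
    · exact Tendsto.mono_left (by simpa using (continuous_const_add (1 : ℝ)).tendsto 0)
        nhdsWithin_le_nhds
    · filter_upwards [self_mem_nhdsWithin] with σ (hσ : 0 < σ) using lt_add_of_pos_right 1 hσ
  have hpole := tendsto_sub_mul_tsum_nat_rpow.comp hshift
  have hlog := hpole.log one_ne_zero
  rw [Real.log_one] at hlog
  refine hlog.congr' ?_
  filter_upwards [hpole.eventually_ne one_ne_zero] with σ hσ
  simp only [Function.comp_apply, add_sub_cancel_left, ne_eq, mul_eq_zero, not_or] at hσ ⊢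
  rw [Real.log_mul hσ.1 hσ.2, add_comm]

/-! ### A Tauberian theorem via dyadic blocks -/

/-- The sum of `f` over the dyadic block `(2^j, 2^(j+1)]`; the blocks partition the integers `≥ 2`,
which leaves out exactly the two indices at which `log` vanishes. On a block `n ^ (-σ)` is nearly
constant, so Dirichlet series can be compared with power series in `2 ^ (-σ)`. -/
noncomputable def dyadicSum (f : ℕ → ℝ) (j : ℕ) : ℝ :=
  ∑ n ∈ Ioc (2 ^ j) (2 ^ (j + 1)), f n

lemma sum_range_dyadicSum (f : ℕ → ℝ) (J : ℕ) :
    ∑ j ∈ range J, dyadicSum f j = ∑ n ∈ Ioc 1 (2 ^ J), f n := by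
  induction J with
  | zero => simp
  | succ J ih =>
    rw [Finset.sum_range_succ, ih, dyadicSum, Finset.sum_Ioc_consecutive _ Nat.one_le_two_pow
      (Nat.pow_le_pow_right two_pos J.le_succ)]

lemma sum_Ioc_zero_eq_add {M : Type*} [AddCommMonoid M] (f : ℕ → M) {N : ℕ} (hN : N ≠ 0) :
    ∑ n ∈ Ioc 0 N, f n = f 1 + ∑ n ∈ Ioc 1 N, f n := by
  rw [Finset.add_sum_Ioc_eq_sum_Icc (Nat.one_le_iff_ne_zero.2 hN)]
  rfl

lemma dyadicSum_nonneg {f : ℕ → ℝ} (hf : ∀ n, 0 ≤ f n) (j : ℕ) : 0 ≤ dyadicSum f j :=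
  Finset.sum_nonneg fun n _ => hf n

lemma hasSum_dyadicSum {f : ℕ → ℝ} {a : ℝ} (hf : ∀ n, 0 ≤ f n) (h0 : f 0 = 0) (h1 : f 1 = 0)
    (ha : HasSum f a) : HasSum (dyadicSum f) a := by
  rw [hasSum_iff_tendsto_nat_of_nonneg (dyadicSum_nonneg hf)]
  have hsub : Tendsto (fun J : ℕ => 2 ^ J + 1) atTop atTop :=
    (tendsto_add_atTop_nat 1).comp (tendsto_pow_atTop_atTop_of_one_lt one_lt_two)
  refine (ha.tendsto_sum_nat.comp hsub).congr fun J => ?_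
  rw [sum_range_dyadicSum, Function.comp_apply, Nat.range_succ_eq_Icc_zero,
    ← Finset.add_sum_Ioc_eq_sum_Icc (Nat.zero_le _), sum_Ioc_zero_eq_add f (by positivity), h0, h1,
    zero_add, zero_add]

lemma log_le_of_mem_dyadic {j n : ℕ} (hn : n ∈ Ioc (2 ^ j) (2 ^ (j + 1))) :
    log n ≤ (j + 1) * log 2 := by
  obtain ⟨hlt, hle⟩ := Finset.mem_Ioc.1 hn
  have hn0 : (0 : ℝ) < n := by exact_mod_cast (Nat.zero_le _).trans_lt hlt
  calc log n ≤ log (2 ^ (j + 1)) := Real.log_le_log hn0 (by exact_mod_cast hle)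
    _ = (j + 1) * log 2 := by
      rw [Real.log_pow]
      push_cast
      ring

lemma le_log_of_mem_dyadic {j n : ℕ} (hn : n ∈ Ioc (2 ^ j) (2 ^ (j + 1))) :
    j * log 2 ≤ log n := by
  rw [← Real.log_pow]
  exact Real.log_le_log (by positivity) (by exact_mod_cast (Finset.mem_Ioc.1 hn).1.le)

lemma half_mul_le_log_of_mem_dyadic {j n : ℕ} (hn : n ∈ Ioc (2 ^ j) (2 ^ (j + 1))) :
    (j + 1) / 2 * log 2 ≤ log n := by
  have h2 : log 2 ≤ log n := Real.log_le_log two_pos <| by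
    exact_mod_cast Nat.succ_le_of_lt (Nat.one_le_two_pow.trans_lt (Finset.mem_Ioc.1 hn).1)
  linarith [le_log_of_mem_dyadic hn]

lemma abs_dyadicSum_div_log_sub_le {w : ℕ → ℝ} (hw : ∀ n, 0 ≤ w n) (j : ℕ) :
    |dyadicSum (fun n => w n / log n) j - dyadicSum w j / ((j + 1) * log 2)| ≤
      2 / log 2 * dyadicSum w j * (1 / ((j : ℝ) + 1) ^ 2) := by
  simp only [dyadicSum, Finset.sum_div, Finset.mul_sum, Finset.sum_mul]
  rw [← Finset.sum_sub_distrib]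
  refine (Finset.abs_sum_le_sum_abs _ _).trans (Finset.sum_le_sum fun n hn => ?_)
  have hlog : 0 < log n :=
    (show 0 < ((j : ℝ) + 1) / 2 * log 2 by positivity).trans_le (half_mul_le_log_of_mem_dyadic hn)
  have hgap : 0 ≤ (j + 1) * log 2 - log n := sub_nonneg.2 (log_le_of_mem_dyadic hn)
  have heq : w n / log n - w n / ((j + 1) * log 2) =
      w n * (((j + 1) * log 2 - log n) / (log n * ((j + 1) * log 2))) := by
    field_simp
  rw [heq, abs_of_nonneg (mul_nonneg (hw n) (by positivity))]
  calc w n * (((j + 1) * log 2 - log n) / (log n * ((j + 1) * log 2)))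
      ≤ w n * (log 2 / ((j + 1) / 2 * log 2 * ((j + 1) * log 2))) := by
        gcongr
        · exact hw n
        · linarith [le_log_of_mem_dyadic hn]
        · exact half_mul_le_log_of_mem_dyadic hn
    _ = 2 / log 2 * w n * (1 / ((j : ℝ) + 1) ^ 2) := by
        field_simp

lemma abs_sum_range_dyadicSum_sub_log_two_le {w : ℕ → ℝ} {C : ℝ}
    (hC : ∀ N : ℕ, |∑ n ∈ Ioc 0 N, w n - log N| ≤ C) (J : ℕ) :
    |∑ j ∈ range J, (dyadicSum w j - log 2)| ≤ 2 * C := by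
  have hone : |w 1| ≤ C := by simpa using hC 1
  have hpow := hC (2 ^ J)
  rw [sum_Ioc_zero_eq_add w (by positivity), Nat.cast_pow, Real.log_pow, Nat.cast_ofNat] at hpow
  rw [Finset.sum_sub_distrib, sum_range_dyadicSum, Finset.sum_const, Finset.card_range,
    nsmul_eq_mul, abs_le]
  constructor <;> linarith [abs_le.1 hone, abs_le.1 hpow]

theorem exists_tendsto_sum_dyadicSum_sub_inv {w : ℕ → ℝ} {C : ℝ} (hw : ∀ n, 0 ≤ w n)
    (hC : ∀ N : ℕ, |∑ n ∈ Ioc 0 N, w n - log N| ≤ C) :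
    ∃ d, Tendsto (fun J : ℕ =>
      ∑ j ∈ range J, (dyadicSum (fun n => w n / log n) j - 1 / ((j : ℝ) + 1))) atTop (𝓝 d) := by
  have hbound := abs_sum_range_dyadicSum_sub_log_two_le hC
  have hblock (j : ℕ) : dyadicSum w j ≤ 4 * C + log 2 := by
    have := hbound (j + 1)
    rw [Finset.sum_range_succ] at this
    linarith [abs_le.1 this, abs_le.1 (hbound j)]
  -- Dirichlet's test: `1 / (j + 1)` decreases to `0`, and the block sums of `w` minus `log 2` have
  -- bounded partial sums.
  obtain ⟨d₁, hd₁⟩ : ∃ d, Tendsto (fun J : ℕ => ∑ j ∈ range J,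
      1 / ((j : ℝ) + 1) * (dyadicSum w j - log 2)) atTop (𝓝 d) :=
    cauchySeq_tendsto_of_complete <|
      (antitone_nat_of_succ_le fun j => by
        gcongr
        simp).cauchySeq_series_mul_of_tendsto_zero_of_bounded
        tendsto_one_div_add_atTop_nhds_zero_nat hbound
  have hsq : Summable fun j : ℕ => 2 / log 2 * (4 * C + log 2) * (1 / ((j : ℝ) + 1) ^ 2) := by
    refine Summable.mul_left _ ?_
    exact_mod_cast (summable_nat_add_iff 1).2 (Real.summable_one_div_nat_pow.2 one_lt_two)
  have herr : Summable fun j : ℕ =>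
      dyadicSum (fun n => w n / log n) j - dyadicSum w j / ((j + 1) * log 2) :=
    hsq.of_norm_bounded fun j => (abs_dyadicSum_div_log_sub_le hw j).trans <| by
      gcongr
      exact hblock j
  refine ⟨_, ((hd₁.div_const (log 2)).add herr.hasSum.tendsto_sum_nat).congr fun J => ?_⟩
  rw [Finset.sum_div, ← Finset.sum_add_distrib]
  refine Finset.sum_congr rfl fun j _ => ?_
  field_simp
  ring

lemma rpow_neg_mem_Icc_of_mem_dyadic {j n : ℕ} {σ : ℝ} (hσ : 0 ≤ σ)
    (hn : n ∈ Ioc (2 ^ j) (2 ^ (j + 1))) :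
    (n : ℝ) ^ (-σ) ∈ Set.Icc (((2 : ℝ) ^ (-σ)) ^ (j + 1)) (((2 : ℝ) ^ (-σ)) ^ j) := by
  obtain ⟨hlt, hle⟩ := Finset.mem_Ioc.1 hn
  have hn0 : (0 : ℝ) < n := by exact_mod_cast (Nat.zero_le _).trans_lt hlt
  simp only [Real.rpow_pow_comm zero_le_two]
  exact ⟨Real.rpow_le_rpow_of_nonpos hn0 (by exact_mod_cast hle) (neg_nonpos.2 hσ),
    Real.rpow_le_rpow_of_nonpos (by positivity) (by exact_mod_cast hlt.le) (neg_nonpos.2 hσ)⟩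

lemma exists_hasSum_dyadicSum_mul_pow {f : ℕ → ℝ} {a σ : ℝ} (hf : ∀ n, 0 ≤ f n) (h0 : f 0 = 0)
    (h1 : f 1 = 0) (hσ : 0 ≤ σ) (ha : HasSum (fun n : ℕ => f n * (n : ℝ) ^ (-σ)) a) :
    ∃ b ∈ Set.Icc ((2 : ℝ) ^ (-σ) * a) a,
      HasSum (fun j => dyadicSum f j * ((2 : ℝ) ^ (-σ)) ^ (j + 1)) b := by
  have hblocks : HasSum (dyadicSum fun n : ℕ => f n * (n : ℝ) ^ (-σ)) a :=
    hasSum_dyadicSum (fun n => mul_nonneg (hf n) (by positivity)) (by simp [h0]) (by simp [h1]) ha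
  have hle (j : ℕ) : dyadicSum f j * ((2 : ℝ) ^ (-σ)) ^ (j + 1) ≤
      dyadicSum (fun n : ℕ => f n * (n : ℝ) ^ (-σ)) j := by
    rw [dyadicSum, Finset.sum_mul]
    exact Finset.sum_le_sum fun n hn =>
      mul_le_mul_of_nonneg_left (rpow_neg_mem_Icc_of_mem_dyadic hσ hn).1 (hf n)
  have hge (j : ℕ) : (2 : ℝ) ^ (-σ) * dyadicSum (fun n : ℕ => f n * (n : ℝ) ^ (-σ)) j ≤
      dyadicSum f j * ((2 : ℝ) ^ (-σ)) ^ (j + 1) := by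
    rw [pow_succ', mul_left_comm]
    refine mul_le_mul_of_nonneg_left ?_ (by positivity)
    rw [dyadicSum, dyadicSum, Finset.sum_mul]
    exact Finset.sum_le_sum fun n hn =>
      mul_le_mul_of_nonneg_left (rpow_neg_mem_Icc_of_mem_dyadic hσ hn).2 (hf n)
  have hsum : Summable fun j => dyadicSum f j * ((2 : ℝ) ^ (-σ)) ^ (j + 1) :=
    hblocks.summable.of_nonneg_of_le
      (fun j => mul_nonneg (dyadicSum_nonneg hf j) (by positivity)) hle
  exact ⟨_, ⟨hasSum_le hge (hblocks.mul_left _) hsum.hasSum,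
    hasSum_le hle hsum.hasSum hblocks⟩, hsum.hasSum⟩

lemma tendsto_two_rpow_neg : Tendsto (fun σ : ℝ => (2 : ℝ) ^ (-σ)) (𝓝[>] 0) (𝓝[<] 1) := by
  refine tendsto_nhdsWithin_iff.2 ⟨?_, ?_⟩
  · have hcont : Continuous fun σ : ℝ => (2 : ℝ) ^ (-σ) :=
      Real.continuous_const_rpow two_ne_zero |>.comp continuous_neg
    simpa using (hcont.tendsto 0).mono_left nhdsWithin_le_nhds
  · filter_upwards [self_mem_nhdsWithin] with σ (hσ : 0 < σ)
    exact Real.rpow_lt_one_of_one_lt_of_neg one_lt_two (neg_lt_zero.2 hσ)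

lemma tendsto_one_sub_two_rpow_neg_div :
    Tendsto (fun σ : ℝ => (1 - (2 : ℝ) ^ (-σ)) / σ) (𝓝[>] 0) (𝓝 (log 2)) := by
  have hderiv : HasDerivAt (fun σ : ℝ => (2 : ℝ) ^ (-σ)) (-log 2) 0 := by
    simpa using (hasDerivAt_neg (0 : ℝ)).const_rpow two_pos
  rw [← neg_neg (log 2)]
  refine hderiv.tendsto_slope_zero_right.neg.congr fun σ => ?_
  rw [zero_add, neg_zero, Real.rpow_zero, smul_eq_mul, div_eq_inv_mul]
  ring

lemma tendsto_log_one_sub_two_rpow_neg_sub_log :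
    Tendsto (fun σ : ℝ => log (1 - (2 : ℝ) ^ (-σ)) - log σ) (𝓝[>] 0) (𝓝 (log (log 2))) := by
  refine (tendsto_one_sub_two_rpow_neg_div.log (Real.log_pos one_lt_two).ne').congr' ?_
  filter_upwards [self_mem_nhdsWithin, tendsto_two_rpow_neg.eventually self_mem_nhdsWithin]
    with σ (hσ : 0 < σ) (hz : (2 : ℝ) ^ (-σ) < 1)
  exact Real.log_div (by linarith) hσ.ne'

lemma tendsto_one_sub_two_rpow_neg_mul {F : ℝ → ℝ} {ℓ : ℝ}
    (hF : Tendsto (fun σ => F σ + log σ) (𝓝[>] 0) (𝓝 ℓ)) :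
    Tendsto (fun σ => (1 - (2 : ℝ) ^ (-σ)) * F σ) (𝓝[>] 0) (𝓝 0) := by
  have hid : Tendsto (fun σ : ℝ => σ) (𝓝[>] 0) (𝓝 0) := nhdsWithin_le_nhds
  have hlog : Tendsto (fun σ : ℝ => log σ * σ) (𝓝[>] 0) (𝓝 0) := by
    simpa using tendsto_log_mul_rpow_nhdsGT_zero zero_lt_one
  have hmul := tendsto_one_sub_two_rpow_neg_div.mul ((hid.mul hF).sub hlog)
  rw [zero_mul, sub_zero, mul_zero] at hmul
  refine hmul.congr' ?_
  filter_upwards [self_mem_nhdsWithin] with σ (hσ : 0 < σ)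
  field_simp
  ring

theorem eq_add_log_log_two_of_tendsto_sum_dyadicSum {f : ℕ → ℝ} {F : ℝ → ℝ} {d ℓ : ℝ}
    (hf : ∀ n, 0 ≤ f n) (h0 : f 0 = 0) (h1 : f 1 = 0)
    (hd : Tendsto (fun J : ℕ => ∑ j ∈ range J, (dyadicSum f j - 1 / ((j : ℝ) + 1))) atTop (𝓝 d))
    (hF : ∀ σ > 0, HasSum (fun n : ℕ => f n * (n : ℝ) ^ (-σ)) (F σ))
    (hℓ : Tendsto (fun σ => F σ + log σ) (𝓝[>] 0) (𝓝 ℓ)) : d = ℓ + log (log 2) := by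
  choose! B hB hsum using fun σ (hσ : 0 < σ) =>
    exists_hasSum_dyadicSum_mul_pow hf h0 h1 hσ.le (hF σ hσ)
  -- Abel's theorem along `z = 2 ^ (-σ)`, using `∑ z ^ (j + 1) / (j + 1) = -log (1 - z)`.
  have habel : Tendsto (fun σ => B σ + log (1 - (2 : ℝ) ^ (-σ))) (𝓝[>] 0) (𝓝 d) := by
    have hpow := (Real.tendsto_tsum_powerSeries_nhdsWithin_lt hd).comp tendsto_two_rpow_neg
    have hz : Tendsto (fun σ : ℝ => (2 : ℝ) ^ (-σ)) (𝓝[>] 0) (𝓝 1) :=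
      tendsto_two_rpow_neg.mono_right nhdsWithin_le_nhds
    have hmul := hpow.mul hz
    rw [mul_one] at hmul
    refine hmul.congr' ?_
    filter_upwards [self_mem_nhdsWithin, tendsto_two_rpow_neg.eventually self_mem_nhdsWithin]
      with σ (hσ : 0 < σ) (hlt : (2 : ℝ) ^ (-σ) < 1)
    have hlog := Real.hasSum_pow_div_log_of_abs_lt_one
      (show |(2 : ℝ) ^ (-σ)| < 1 by rwa [abs_of_pos (by positivity)])
    rw [Function.comp_apply, ← tsum_mul_right, ← sub_neg_eq_add,
      ← ((hsum σ hσ).sub hlog).tsum_eq]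
    exact tsum_congr fun j => by ring
  have hgap : Tendsto (fun σ => B σ - F σ) (𝓝[>] 0) (𝓝 0) := by
    have hneg := (tendsto_one_sub_two_rpow_neg_mul hℓ).neg
    rw [neg_zero] at hneg
    refine tendsto_of_tendsto_of_tendsto_of_le_of_le' hneg tendsto_const_nhds ?_ ?_ <;>
      filter_upwards [self_mem_nhdsWithin] with σ (hσ : 0 < σ)
    · linarith [(hB σ hσ).1]
    · linarith [(hB σ hσ).2]
  have hsplit := (hgap.add hℓ).add tendsto_log_one_sub_two_rpow_neg_sub_log
  rw [zero_add] at hsplit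
  exact tendsto_nhds_unique habel (hsplit.congr fun σ => by ring)

lemma log_log_two_pow {J : ℕ} (hJ : J ≠ 0) : log (log ((2 : ℝ) ^ J)) = log J + log (log 2) := by
  rw [Real.log_pow, Real.log_mul (by positivity) (Real.log_pos one_lt_two).ne']

lemma tendsto_sub_log_log_of_tendsto_two_pow {S : ℕ → ℝ} {a : ℝ} (hS : Monotone S)
    (ha : Tendsto (fun J : ℕ => S (2 ^ J) - log (log ((2 : ℝ) ^ J))) atTop (𝓝 a)) :
    Tendsto (fun N : ℕ => S N - log (log N)) atTop (𝓝 a) := by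
  have hgap : Tendsto (fun J : ℕ => log (log ((2 : ℝ) ^ (J + 1))) - log (log ((2 : ℝ) ^ J)))
      atTop (𝓝 0) := by
    refine Real.tendsto_log_nat_add_one_sub_log.congr' ?_
    filter_upwards [eventually_ne_atTop 0] with J hJ
    rw [log_log_two_pow hJ, log_log_two_pow J.succ_ne_zero]
    push_cast
    ring
  have hlower := ha.sub hgap
  have hupper := ((tendsto_add_atTop_iff_nat 1).2 ha).add hgap
  rw [sub_zero] at hlower
  rw [add_zero] at hupper
  have hlog : Tendsto (Nat.log 2) atTop atTop :=
    tendsto_atTop_atTop.2 fun J => ⟨2 ^ J, fun _ => Nat.le_log_of_pow_le one_lt_two⟩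
  refine tendsto_of_tendsto_of_tendsto_of_le_of_le' (hlower.comp hlog) (hupper.comp hlog) ?_ ?_ <;>
    filter_upwards [eventually_ge_atTop 2] with N hN <;>
    simp only [Function.comp_apply]
  · have hN2 : (N : ℝ) ≤ 2 ^ (Nat.log 2 N + 1) := by
      exact_mod_cast (Nat.lt_pow_succ_log_self one_lt_two N).le
    have hlogN : 0 < log N := Real.log_pos (by exact_mod_cast hN)
    have hle : log (log N) ≤ log (log (2 ^ (Nat.log 2 N + 1))) :=
      Real.log_le_log hlogN (Real.log_le_log (by positivity) hN2)
    linarith [hS (Nat.pow_log_le_self 2 (show N ≠ 0 by omega))]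
  · have hN2 : (2 : ℝ) ^ Nat.log 2 N ≤ N := by
      exact_mod_cast Nat.pow_log_le_self 2 (show N ≠ 0 by omega)
    have hlogJ : 0 < log ((2 : ℝ) ^ Nat.log 2 N) :=
      Real.log_pos (one_lt_pow₀ one_lt_two (Nat.log_pos one_lt_two hN).ne')
    have hle : log (log (2 ^ Nat.log 2 N)) ≤ log (log N) :=
      Real.log_le_log hlogJ (Real.log_le_log (by positivity) hN2)
    linarith [hS (Nat.lt_pow_succ_log_self one_lt_two N).le]

theorem tendsto_sum_div_log_sub_log_log {w : ℕ → ℝ} {F : ℝ → ℝ} {C ℓ : ℝ} (hw : ∀ n, 0 ≤ w n)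
    (hC : ∀ N : ℕ, |∑ n ∈ Ioc 0 N, w n - log N| ≤ C)
    (hF : ∀ σ > 0, HasSum (fun n : ℕ => w n / log n * (n : ℝ) ^ (-σ)) (F σ))
    (hℓ : Tendsto (fun σ => F σ + log σ) (𝓝[>] 0) (𝓝 ℓ)) :
    Tendsto (fun N : ℕ => ∑ n ∈ Ioc 0 N, w n / log n - log (log N)) atTop
      (𝓝 (ℓ + eulerMascheroniConstant)) := by
  have hf (n : ℕ) : 0 ≤ w n / log n := div_nonneg (hw n) (Real.log_natCast_nonneg n)
  obtain ⟨d, hd⟩ := exists_tendsto_sum_dyadicSum_sub_inv hw hC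
  have hdℓ : d = ℓ + log (log 2) :=
    eq_add_log_log_two_of_tendsto_sum_dyadicSum hf (by simp) (by simp) hd hF hℓ
  refine tendsto_sub_log_log_of_tendsto_two_pow (S := fun N => ∑ n ∈ Ioc 0 N, w n / log n)
    (fun M N hMN => Finset.sum_le_sum_of_subset_of_nonneg (Finset.Ioc_subset_Ioc_right hMN)
      fun n _ _ => hf n) ?_
  have hsum := (hd.add Real.tendsto_harmonic_sub_log).sub_const (log (log 2))
  rw [show d + eulerMascheroniConstant - log (log 2) = ℓ + eulerMascheroniConstant by
    rw [hdℓ]; ring] at hsum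
  refine hsum.congr' ?_
  filter_upwards [eventually_ne_atTop 0] with J hJ
  have hharm : (harmonic J : ℝ) = ∑ j ∈ range J, 1 / ((j : ℝ) + 1) := by
    simp [harmonic]
  rw [sum_Ioc_zero_eq_add _ (by positivity), Finset.sum_sub_distrib, sum_range_dyadicSum, hharm,
    log_log_two_pow hJ]
  simp only [Nat.cast_one, Real.log_one, div_zero]
  ring

/-! ### Mertens' third theorem -/

theorem tendsto_sum_vonMangoldt_div_div_log_sub_log_log :
    Tendsto (fun N : ℕ => ∑ n ∈ Ioc 0 N, Λ n / n / log n - log (log N)) atTop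
      (𝓝 eulerMascheroniConstant) := by
  rw [← zero_add eulerMascheroniConstant]
  refine tendsto_sum_div_log_sub_log_log (C := log 4 + 4)
    (fun n => div_nonneg vonMangoldt_nonneg n.cast_nonneg) (fun N => ?_) (fun σ hσ => ?_)
    tendsto_log_tsum_rpow_add_log
  · have h4 : 0 ≤ log 4 := by positivity
    rcases eq_or_ne N 0 with rfl | hN
    · simpa using by linarith
    rw [abs_le]
    constructor <;>
      linarith [log_sub_one_le_sum_vonMangoldt_div hN, sum_vonMangoldt_div_le_log_add hN]
  · convert hasSum_vonMangoldt_div_log_mul_rpow (lt_add_of_pos_right 1 hσ) using 2 with n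
    rcases eq_or_ne n 0 with rfl | hn
    · simp
    rw [neg_add, Real.rpow_add (by positivity), Real.rpow_neg_one]
    ring

lemma log_div_totient {n : ℕ} (hn : n ≠ 0) :
    log (n / n.totient) = ∑ p ∈ n.primeFactors, -log (1 - (p : ℝ)⁻¹) := by
  have hφ : (n.totient : ℝ) = n * ∏ p ∈ n.primeFactors, (1 - (p : ℝ)⁻¹) := by
    have h := congrArg (Rat.cast (K := ℝ)) (Nat.totient_eq_mul_prod_factors n)
    push_cast at h
    exact h
  have hfactor (p : ℕ) (hp : p ∈ n.primeFactors) : 1 - (p : ℝ)⁻¹ ≠ 0 :=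
    sub_ne_zero.2 (inv_ne_one.2 (by exact_mod_cast (Nat.prime_of_mem_primeFactors hp).ne_one)).symm
  rw [hφ, div_mul_cancel_left₀ (by positivity), Real.log_inv, Real.log_prod hfactor,
    Finset.sum_neg_distrib]

lemma vonMangoldt_div_div_log_nonneg (n : ℕ) : 0 ≤ Λ n / n / log n :=
  div_nonneg (div_nonneg vonMangoldt_nonneg n.cast_nonneg) (Real.log_natCast_nonneg n)

lemma sum_vonMangoldt_div_div_log_prime_pow_le {p : ℕ} (hp : p.Prime) (K : ℕ) :
    ∑ k ∈ Finset.Icc 1 K, Λ (p ^ k) / (p ^ k : ℕ) / log (p ^ k : ℕ) ≤ -log (1 - (p : ℝ)⁻¹) := by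
  have hlt : |(p : ℝ)⁻¹| < 1 := by
    rw [abs_of_nonneg (by positivity)]
    exact inv_lt_one_of_one_lt₀ (by exact_mod_cast hp.one_lt)
  have hsum : HasSum (fun k => Λ (p ^ (k + 1)) / (p ^ (k + 1) : ℕ) / log (p ^ (k + 1) : ℕ))
      (-log (1 - (p : ℝ)⁻¹)) := by
    convert hasSum_vonMangoldt_div_log_mul_prime_pow hp hlt using 2 with k
    simp only [Nat.cast_pow, inv_pow]
    ring
  have hshift := Finset.sum_Ico_add'
    (fun k => Λ (p ^ k) / (p ^ k : ℕ) / log (p ^ k : ℕ)) 0 K 1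
  rw [← Finset.range_eq_Ico, zero_add, Finset.Ico_add_one_right_eq_Icc] at hshift
  rw [← hshift]
  exact sum_le_hasSum (range K) (fun k _ => vonMangoldt_div_div_log_nonneg _) hsum

theorem sum_vonMangoldt_div_div_log_le_log_primorial_div_totient (N : ℕ) :
    ∑ n ∈ Ioc 0 N, Λ n / n / log n ≤ log (primorial N / (primorial N).totient) := by
  let f (n : ℕ) : ℝ := Λ n / n / log n
  have hsupp (n : ℕ) (hn : f n ≠ 0) : IsPrimePow n :=
    ArithmeticFunction.vonMangoldt_ne_zero_iff.1 fun h => hn (by simp [f, h])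
  have hroot {k : ℕ} (hk : 1 ≤ k) : ⌊(N : ℝ) ^ ((1 : ℝ) / k)⌋₊ ≤ N := by
    rcases Nat.eq_zero_or_pos N with rfl | hN
    · simp [Real.zero_rpow (inv_ne_zero (Nat.cast_ne_zero.2 (Nat.one_le_iff_ne_zero.1 hk)))]
    · refine Nat.floor_le_of_le (Real.rpow_le_self_of_one_le (by exact_mod_cast hN) ?_)
      exact div_le_one_of_le₀ (by exact_mod_cast hk) k.cast_nonneg
  rw [log_div_totient (primorial_pos N).ne', primeFactors_primorial]
  calc ∑ n ∈ Ioc 0 N, f n = ∑ n ∈ Ioc 0 N with IsPrimePow n, f n :=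
        (Finset.sum_filter_of_ne fun n _ hn => hsupp n hn).symm
    _ = ∑ k ∈ Finset.Icc 1 ⌊log N / log 2⌋₊,
          ∑ p ∈ Ioc 0 ⌊(N : ℝ) ^ ((1 : ℝ) / k)⌋₊ with p.Prime, f (p ^ k) := by
      simpa only [Nat.floor_natCast] using Chebyshev.sum_PrimePow_eq_sum_sum f N.cast_nonneg
    _ ≤ ∑ k ∈ Finset.Icc 1 ⌊log N / log 2⌋₊, ∑ p ∈ Nat.primesLE N, f (p ^ k) := by
      refine Finset.sum_le_sum fun k hk => Finset.sum_le_sum_of_subset_of_nonneg (fun p hp => ?_)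
        fun _ _ _ => vonMangoldt_div_div_log_nonneg _
      obtain ⟨hpN, hp⟩ := Finset.mem_filter.1 hp
      exact Nat.mem_primesLE.2 ⟨(Finset.mem_Ioc.1 hpN).2.trans (hroot (Finset.mem_Icc.1 hk).1), hp⟩
    _ = ∑ p ∈ Nat.primesLE N, ∑ k ∈ Finset.Icc 1 ⌊log N / log 2⌋₊, f (p ^ k) := Finset.sum_comm
    _ ≤ ∑ p ∈ Nat.primesLE N, -log (1 - (p : ℝ)⁻¹) :=
        Finset.sum_le_sum fun p hp =>
          sum_vonMangoldt_div_div_log_prime_pow_le (Nat.prime_of_mem_primesLE hp) _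

/-! ### Large integers with small totient -/

lemma totient_mul_le (a b : ℕ) : (a * b).totient ≤ a.totient * b := by
  induction b using induction_on_primes with
  | zero => simp
  | one => simp
  | prime_mul p b hp ih =>
    rw [mul_left_comm a, mul_left_comm a.totient]
    refine le_trans ?_ (Nat.mul_le_mul_left p ih)
    by_cases h : p ∣ a * b
    · rw [Nat.totient_mul_of_prime_of_dvd hp h]
    · rw [Nat.totient_mul_of_prime_of_not_dvd hp h]
      exact Nat.mul_le_mul_right _ (Nat.sub_le p 1)

lemma exists_totient_lt_and_div_totient_mul_le {P : ℕ} (hP : P ≠ 0) {x : ℝ} (hx : 0 < x) :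
    ∃ n : ℕ, (n.totient : ℝ) < x ∧ (P / P.totient : ℝ) * (x - P.totient) ≤ n := by
  have hφ : (0 : ℝ) < P.totient := by exact_mod_cast Nat.totient_pos.2 (Nat.pos_of_ne_zero hP)
  obtain ⟨r, hr⟩ : ∃ r, ⌈x / P.totient⌉₊ = r + 1 :=
    Nat.exists_eq_succ_of_ne_zero (Nat.ceil_pos.2 (div_pos hx hφ)).ne'
  have hr_lt : (r : ℝ) * P.totient < x := (lt_div_iff₀ hφ).1 (Nat.lt_ceil.1 (by omega))
  have hr_le : x / P.totient ≤ r + 1 := by exact_mod_cast hr ▸ Nat.le_ceil (x / P.totient)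
  refine ⟨P * r, lt_of_le_of_lt ?_ hr_lt, ?_⟩
  · rw [mul_comm (r : ℝ)]
    exact_mod_cast totient_mul_le P r
  · calc (P / P.totient : ℝ) * (x - P.totient) = P * (x / P.totient - 1) := by field_simp
      _ ≤ P * r := by gcongr; linarith
      _ = ((P * r : ℕ) : ℝ) := by push_cast; rfl

lemma eventually_mul_log_le_primorial_div_totient {c : ℝ} (hc : c < exp eulerMascheroniConstant) :
    ∀ᶠ N : ℕ in atTop, c * log N ≤ primorial N / (primorial N).totient := by
  have hlim := (Real.continuous_exp.tendsto _).comp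
    tendsto_sum_vonMangoldt_div_div_log_sub_log_log
  filter_upwards [hlim.eventually_const_le hc, eventually_gt_atTop 1] with N hcN hN
  have hlog : 0 < log N := Real.log_pos (by exact_mod_cast hN)
  have hP : 0 < primorial N := primorial_pos N
  have hφ : 0 < (primorial N).totient := Nat.totient_pos.2 hP
  rw [Function.comp_apply, Real.exp_sub, Real.exp_log hlog, le_div_iff₀ hlog] at hcN
  refine hcN.trans ((Real.le_log_iff_exp_le (by positivity)).1 ?_)
  exact sum_vonMangoldt_div_div_log_le_log_primorial_div_totient N

lemma tendsto_log_floor_mul_div_log {a : ℝ} (ha : 0 < a) :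
    Tendsto (fun y => log ⌊a * y⌋₊ / log y) atTop (𝓝 1) := by
  have hquot := (Real.continuousAt_log ha.ne').tendsto.comp (tendsto_nat_floor_mul_div_atTop ha.le)
  have h := (hquot.div_atTop Real.tendsto_log_atTop).const_add 1
  rw [add_zero] at h
  refine h.congr' ?_
  have hfloor : ∀ᶠ y in atTop, 0 < ⌊a * y⌋₊ :=
    (tendsto_nat_floor_atTop.comp (tendsto_id.const_mul_atTop ha)).eventually_gt_atTop 0
  filter_upwards [hfloor, eventually_gt_atTop 1] with y hfl hy
  have hlog : log y ≠ 0 := (Real.log_pos hy).ne'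
  rw [Function.comp_apply, Real.log_div (by positivity) (by positivity)]
  field_simp
  ring

lemma primorial_floor_log_le_sqrt {x : ℝ} (hx : 1 ≤ x) :
    (primorial ⌊(2 * log 4)⁻¹ * log x⌋₊ : ℝ) ≤ √x := by
  have hx0 : 0 < x := by linarith
  calc (primorial ⌊(2 * log 4)⁻¹ * log x⌋₊ : ℝ) ≤ (4 : ℝ) ^ ⌊(2 * log 4)⁻¹ * log x⌋₊ := by
        exact_mod_cast primorial_le_four_pow _
    _ ≤ (4 : ℝ) ^ ((2 * log 4)⁻¹ * log x) := by
        rw [← Real.rpow_natCast]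
        gcongr
        · norm_num
        · exact Nat.floor_le (mul_nonneg (by positivity) (Real.log_nonneg hx))
    _ = √x := by
        rw [Real.rpow_def_of_pos (by norm_num), Real.sqrt_eq_rpow, Real.rpow_def_of_pos hx0]
        congr 1
        field_simp

theorem eventually_exists_totient_lt_and_mul_log_log_le {c : ℝ}
    (hc : c < exp eulerMascheroniConstant) :
    ∀ᶠ x : ℝ in atTop, ∃ n : ℕ, (n.totient : ℝ) < x ∧ c * (x * log (log x)) ≤ n := by
  obtain ⟨c', hcc', hc'⟩ := exists_between (max_lt hc (Real.exp_pos _))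
  obtain ⟨hcc', hc'0⟩ := max_lt_iff.1 hcc'
  have ha : 0 < (2 * log 4)⁻¹ := by positivity
  set N : ℝ → ℕ := fun x => ⌊(2 * log 4)⁻¹ * log x⌋₊
  have hN : Tendsto N atTop atTop :=
    tendsto_nat_floor_atTop.comp (Real.tendsto_log_atTop.const_mul_atTop ha)
  have hsqrt : Tendsto (fun x => 1 - √x / x) atTop (𝓝 1) := by
    simpa [Real.sqrt_div_self'] using
      (tendsto_inv_atTop_zero.comp Real.tendsto_sqrt_atTop).const_sub 1
  have hlim : Tendsto (fun x => c' * (log (N x) / log (log x) * (1 - √x / x))) atTop (𝓝 c') := by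
    simpa [N] using (((tendsto_log_floor_mul_div_log ha).comp Real.tendsto_log_atTop).mul
      hsqrt).const_mul c'
  filter_upwards [hlim.eventually_const_le hcc', eventually_gt_atTop (exp 1),
    hN.eventually (eventually_mul_log_le_primorial_div_totient hc')] with x hlim_x hx hprim
  have hx1 : 1 < x := (Real.one_lt_exp_iff.2 one_pos).trans hx
  have hloglog : 0 < log (log x) := Real.log_pos ((Real.lt_log_iff_exp_lt (by linarith)).2 hx)
  obtain ⟨n, hφn, hn⟩ :=
    exists_totient_lt_and_div_totient_mul_le (primorial_pos (N x)).ne' (by linarith : 0 < x)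
  have hφ : ((primorial (N x)).totient : ℝ) ≤ √x :=
    (Nat.cast_le.2 (Nat.totient_le _)).trans (primorial_floor_log_le_sqrt hx1.le)
  refine ⟨n, hφn, ?_⟩
  calc c * (x * log (log x))
      ≤ c' * (log (N x) / log (log x) * (1 - √x / x)) * (x * log (log x)) := by gcongr
    _ = c' * log (N x) * (x - √x) := by field_simp
    _ ≤ primorial (N x) / (primorial (N x)).totient * (x - (primorial (N x)).totient) := by
        have : √x ≤ x := Real.sqrt_le_self_iff.2 (Or.inr hx1.le)
        gcongr
    _ ≤ n := hn

lemma eventually_exists_totient_lt_and_one_div_le {a : ℝ}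
    (ha : exp (-eulerMascheroniConstant) < a) :
    ∀ᶠ x : ℝ in atTop, ∃ n : ℕ, n ≠ 0 ∧ (n.totient : ℝ) < x ∧
      1 / (n : ℝ) ≤ a / (x * log (log x)) := by
  have ha0 : 0 < a := (Real.exp_pos _).trans ha
  have hc : a⁻¹ < exp eulerMascheroniConstant := by
    rwa [inv_lt_comm₀ ha0 (Real.exp_pos _), ← Real.exp_neg]
  filter_upwards [eventually_exists_totient_lt_and_mul_log_log_le hc, eventually_gt_atTop 0,
    (Real.tendsto_log_atTop.comp Real.tendsto_log_atTop).eventually_gt_atTop 0]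
    with x ⟨n, hφ, hn⟩ hx hloglog
  have hy : 0 < x * log (log x) := mul_pos hx hloglog
  have hn0 : (0 : ℝ) < n := lt_of_lt_of_le (by positivity) hn
  refine ⟨n, by exact_mod_cast hn0.ne', hφ, ?_⟩
  rwa [div_le_div_iff₀ hn0 hy, one_mul, ← inv_mul_le_iff₀ ha0]

theorem stmt_5 : ∀ ε : ℝ, 0 < ε → ∃ K : ℝ, 0 < K ∧ ∀ m k : ℕ, 2 ≤ m → m ≤ k →
    K ≤ (k : ℝ) / ((m : ℝ) - 1) →
    delta m k ≤ ((Real.exp (-Real.eulerMascheroniConstant) + ε) /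
        ((k : ℝ) / ((m : ℝ) - 1) *
          Real.log (Real.log ((k : ℝ) / ((m : ℝ) - 1))))) ^ (m - 1) := by
  intro ε hε
  obtain ⟨K, hK⟩ := eventually_atTop.1
    (eventually_exists_totient_lt_and_one_div_le (lt_add_of_pos_right _ hε))
  refine ⟨max K 1, by positivity, fun m k hm _ hmk => ?_⟩
  obtain ⟨n, hn, hφ, hle⟩ := hK _ ((le_max_left _ _).trans hmk)
  exact (delta_le_one_div_pow hm hn hφ).trans (pow_le_pow_left₀ (by positivity) hle _)
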